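/- Let A be a finite alphabet, let F ⊆ A* be a recurrent language, and let Z ⊆ A+ be a rational complete bifix code. Then Z ∩ F is an F-complete bifix code: it is a bifix code contained in F that is both right F-complete and left F-complete. -/

import Mathlib

/-- A language is factorial if it is closed under taking factors (infixes). -/
def Factorial {A : Type*} (F : Set (List A)) : Prop :=
  ∀ u w : List A, w ∈ F → u <:+: w → u ∈ F

/-- A language is prolongable if every word extends by a letter on both sides. -/
def Prolongable {A : Type*} (F : Set (List A)) : Prop :=
  ∀ u ∈ F, ∃ a b : A, (a :: u) ∈ F ∧ (u ++ [b]) ∈ F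

/-- A subshift language: nonempty, factorial and prolongable. -/
def SubshiftLanguage {A : Type*} (F : Set (List A)) : Prop :=
  F.Nonempty ∧ Factorial F ∧ Prolongable F

/-- A recurrent language. -/
def Recurrent {A : Type*} (F : Set (List A)) : Prop :=
  SubshiftLanguage F ∧ ∀ u ∈ F, ∀ v ∈ F, ∃ w : List A, u ++ w ++ v ∈ F

/-- A uniformly recurrent language. -/
def UniformlyRecurrent {A : Type*} (F : Set (List A)) : Prop :=
  SubshiftLanguage F ∧ ∀ u ∈ F, ∃ N : ℕ, ∀ w ∈ F, N ≤ w.length → u <:+: w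

/-- The Kleene star of a set of words: all concatenations of finitely many elements. -/
def KStarSet {A : Type*} (X : Set (List A)) : Set (List A) :=
  {w | ∃ l : List (List A), (∀ x ∈ l, x ∈ X) ∧ w = l.flatten}

/-- A code: a nonempty set of nonempty words with unique factorization. -/
def IsCode {A : Type*} (X : Set (List A)) : Prop :=
  X.Nonempty ∧ (∀ x ∈ X, x ≠ []) ∧
    ∀ l m : List (List A), (∀ x ∈ l, x ∈ X) → (∀ y ∈ m, y ∈ X) →
      l.flatten = m.flatten → l = m

/-- A prefix code: a nonempty set of nonempty words, none a proper prefix of another. -/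
def PrefixCode {A : Type*} (X : Set (List A)) : Prop :=
  X.Nonempty ∧ (∀ x ∈ X, x ≠ []) ∧ ∀ x ∈ X, ∀ y ∈ X, x <+: y → x = y

/-- A suffix code: a nonempty set of nonempty words, none a proper suffix of another. -/
def SuffixCode {A : Type*} (X : Set (List A)) : Prop :=
  X.Nonempty ∧ (∀ x ∈ X, x ≠ []) ∧ ∀ x ∈ X, ∀ y ∈ X, x <:+ y → x = y

/-- A bifix code is both a prefix code and a suffix code. -/
def BifixCode {A : Type*} (X : Set (List A)) : Prop :=
  PrefixCode X ∧ SuffixCode X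

/-- `X` is right `F`-complete: every element of `F` is a prefix of an element of `X*`. -/
def RightFComplete {A : Type*} (X F : Set (List A)) : Prop :=
  ∀ u ∈ F, ∃ w ∈ KStarSet X, u <+: w

/-- `X` is left `F`-complete: every element of `F` is a suffix of an element of `X*`. -/
def LeftFComplete {A : Type*} (X F : Set (List A)) : Prop :=
  ∀ u ∈ F, ∃ w ∈ KStarSet X, u <:+ w

/-- `X` is `F`-complete: both right and left `F`-complete. -/
def FComplete {A : Type*} (X F : Set (List A)) : Prop :=
  RightFComplete X F ∧ LeftFComplete X F

/-- The decoding map: a word over the alphabet `X` is sent to its concatenation in `A*`. -/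
def decode {A : Type*} (X : Set (List A)) : List ↥X → List A :=
  fun l => (l.map Subtype.val).flatten

/-- A language is rational if it is accepted by a DFA with finitely many states. -/
def IsRational {A : Type*} (L : Set (List A)) : Prop :=
  ∃ (σ : Type) (_ : Fintype σ) (M : DFA A σ), ∀ w : List A, w ∈ M.accepts ↔ w ∈ L

/-!
If a nonempty `u ∈ F` were a prefix of words `w ∈ F` all of which extend to words of `Z`, then
recurrence would give a chain `u <:+ u w₁ u <:+ u w₂ u w₁ u <:+ ⋯` of such words, and two of them,
`x` and `y`, would have the same left quotient of `Z`; an extension `x t ∈ Z` would then be a proper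
suffix of `y t ∈ Z`. Hence some `w ∈ F` with prefix `u` is not a prefix of a word of `Z`. By
completeness `w` has a prefix `z ∈ Z`, which lies in `F` and is comparable with `u`. Splitting off
such words `z` one after the other covers `u` by a product of words of `Z ∩ F`. The left-hand
statement follows by reversing all words.
-/

theorem exists_rel_map_eq_of_finite_range {α β : Type*} [Nonempty α] {r : α → α → Prop}
    [IsTrans α r] (hr : ∀ x, ∃ y, r x y) {f : α → β} (hf : (Set.range f).Finite) :
    ∃ x y, r x y ∧ f x = f y := by
  choose next hnext using hr
  inhabit α
  let g : ℕ → α := fun n ↦ next^[n] default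
  have hg (n : ℕ) : r (g n) (g (n + 1)) := by
    simpa only [g, Function.iterate_succ_apply'] using hnext (g n)
  obtain ⟨m, n, hmn, heq⟩ :=
    hf.exists_lt_map_eq_of_forall_mem fun n ↦ Set.mem_range_self (f := f) (g n)
  exact ⟨g m, g n, Nat.rel_of_forall_rel_succ_of_lt r hg hmn, heq⟩

section Words

variable {A : Type*} {F X Z : Set (List A)}

/-- A language is irreducible if any two of its words occur in this order, without overlap, in a
word of the language, as in symbolic dynamics. Recurrence of `F` means that `F` is an irreducible
subshift language; irreducibility lets words of `F` be extended leftwards to have a given prefix. -/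
def IrreducibleLanguage (F : Set (List A)) : Prop :=
  ∀ u ∈ F, ∀ v ∈ F, ∃ w : List A, u ++ w ++ v ∈ F

theorem SubshiftLanguage.exists_ne_nil (hF : SubshiftLanguage F) : ∃ u ∈ F, u ≠ [] := by
  obtain ⟨⟨u, hu⟩, -, hprol⟩ := hF
  obtain ⟨a, -, ha, -⟩ := hprol u hu
  exact ⟨a :: u, ha, List.cons_ne_nil a u⟩

theorem PrefixCode.mono (hZ : PrefixCode Z) (hXZ : X ⊆ Z) (hX : X.Nonempty) : PrefixCode X :=
  ⟨hX, fun x hx ↦ hZ.2.1 x (hXZ hx), fun x hx y hy ↦ hZ.2.2 x (hXZ hx) y (hXZ hy)⟩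

theorem SuffixCode.mono (hZ : SuffixCode Z) (hXZ : X ⊆ Z) (hX : X.Nonempty) : SuffixCode X :=
  ⟨hX, fun x hx ↦ hZ.2.1 x (hXZ hx), fun x hx y hy ↦ hZ.2.2 x (hXZ hx) y (hXZ hy)⟩

theorem BifixCode.mono (hZ : BifixCode Z) (hXZ : X ⊆ Z) (hX : X.Nonempty) : BifixCode X :=
  ⟨hZ.1.mono hXZ hX, hZ.2.mono hXZ hX⟩

theorem RightFComplete.mono_right {G : Set (List A)} (hX : RightFComplete X G) (hFG : F ⊆ G) :
    RightFComplete X F :=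
  fun u hu ↦ hX u (hFG hu)

theorem LeftFComplete.mono_right {G : Set (List A)} (hX : LeftFComplete X G) (hFG : F ⊆ G) :
    LeftFComplete X F :=
  fun u hu ↦ hX u (hFG hu)

theorem FComplete.mono_right {G : Set (List A)} (hX : FComplete X G) (hFG : F ⊆ G) :
    FComplete X F :=
  ⟨hX.1.mono_right hFG, hX.2.mono_right hFG⟩

theorem nil_mem_kStarSet (X : Set (List A)) : [] ∈ KStarSet X :=
  ⟨[], List.forall_mem_nil _, rfl⟩

theorem append_mem_kStarSet {x w : List A} (hx : x ∈ X) (hw : w ∈ KStarSet X) :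
    x ++ w ∈ KStarSet X := by
  obtain ⟨l, hl, rfl⟩ := hw
  exact ⟨x :: l, List.forall_mem_cons.2 ⟨hx, hl⟩, List.flatten_cons.symm⟩

theorem RightFComplete.exists_prefix_or_prefix (hX : RightFComplete X F) {u : List A}
    (hu : u ∈ F) (hne : u ≠ []) : ∃ x ∈ X, x <+: u ∨ u <+: x := by
  obtain ⟨_, ⟨_ | ⟨x, l⟩, hl, rfl⟩, huw⟩ := hX u hu
  · exact absurd (List.prefix_nil.1 huw) hne
  · exact ⟨x, hl x List.mem_cons_self,
      List.prefix_or_prefix_of_prefix (List.prefix_append x l.flatten) huw⟩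

theorem Factorial.rightFComplete_of_forall_exists_prefix_or_prefix (hF : Factorial F)
    (hX : ∀ x ∈ X, x ≠ []) (h : ∀ u ∈ F, u ≠ [] → ∃ x ∈ X, x <+: u ∨ u <+: x) :
    RightFComplete X F := by
  intro u hu
  induction hn : u.length using Nat.strong_induction_on generalizing u with
  | _ n ih =>
    subst hn
    rcases eq_or_ne u [] with rfl | hne
    · exact ⟨[], nil_mem_kStarSet X, List.prefix_rfl⟩
    obtain ⟨x, hx, ⟨v, rfl⟩ | hux⟩ := h u hu hne
    · have hv : v ∈ F := hF _ _ hu (List.suffix_append x v).isInfix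
      have hlt : v.length < (x ++ v).length := by
        simpa using List.length_pos_iff.2 (hX x hx)
      obtain ⟨w, hw, hvw⟩ := ih _ hlt v hv rfl
      exact ⟨x ++ w, append_mem_kStarSet hx hw, (List.prefix_append_right_inj x).2 hvw⟩
    · exact ⟨x, by simpa using append_mem_kStarSet hx (nil_mem_kStarSet X), hux⟩

theorem SuffixCode.eq_of_suffix_of_leftQuotient_eq (hZ : SuffixCode Z) {x y z : List A}
    (hxy : x <:+ y) (heq : Language.leftQuotient Z x = Language.leftQuotient Z y)
    (hz : z ∈ Z) (hxz : x <+: z) : x = y := by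
  obtain ⟨t, rfl⟩ := hxz
  have hyt : y ++ t ∈ Z := (Language.ext_iff.1 heq t).1 hz
  obtain ⟨s, rfl⟩ := hxy
  exact List.append_cancel_right (hZ.2.2 _ hz _ hyt ⟨s, (List.append_assoc s x t).symm⟩)

theorem SuffixCode.exists_extension_forall_not_prefix (hZ : SuffixCode Z)
    (hZfin : (Set.range (Language.leftQuotient Z)).Finite) (hF : IrreducibleLanguage F)
    {u : List A} (hu : u ∈ F) (hne : u ≠ []) :
    ∃ w ∈ F, u <+: w ∧ ∀ z ∈ Z, ¬ w <+: z := by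
  by_contra! hext
  let W := {w // w ∈ F ∧ u <+: w}
  let r (x y : W) : Prop := x.1 <:+ y.1 ∧ x.1.length < y.1.length
  have : Nonempty W := ⟨⟨u, hu, List.prefix_rfl⟩⟩
  have : IsTrans W r := ⟨fun _ _ _ hxy hyz ↦ ⟨hxy.1.trans hyz.1, hxy.2.trans hyz.2⟩⟩
  have exists_longer (x : W) : ∃ y, r x y := by
    obtain ⟨v, hv⟩ := hF u hu x.1 x.2.1
    refine ⟨⟨u ++ v ++ x.1, hv, v ++ x.1, (List.append_assoc ..).symm⟩, List.suffix_append .., ?_⟩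
    have := List.length_pos_iff.2 hne
    simp only [List.length_append]
    omega
  obtain ⟨x, y, ⟨hxy, hlt⟩, heq⟩ := exists_rel_map_eq_of_finite_range exists_longer
    (hZfin.subset (Set.range_comp_subset_range (Subtype.val : W → List A) _))
  obtain ⟨z, hz, hxz⟩ := hext x.1 x.2.1 x.2.2
  exact hlt.ne (congrArg _ (hZ.eq_of_suffix_of_leftQuotient_eq hxy heq hz hxz))

theorem RightFComplete.inter (hZF : RightFComplete Z F) (hFac : Factorial F)
    (hFirr : IrreducibleLanguage F) (hZ : SuffixCode Z)
    (hZfin : (Set.range (Language.leftQuotient Z)).Finite) : RightFComplete (Z ∩ F) F := by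
  refine hFac.rightFComplete_of_forall_exists_prefix_or_prefix (fun z hz ↦ hZ.2.1 z hz.1)
    fun u hu hne ↦ ?_
  obtain ⟨w, hw, huw, hnot⟩ := hZ.exists_extension_forall_not_prefix hZfin hFirr hu hne
  have hwne : w ≠ [] := by
    rintro rfl
    exact hne (List.prefix_nil.1 huw)
  obtain ⟨z, hz, hzw | hwz⟩ := hZF.exists_prefix_or_prefix hw hwne
  · exact ⟨z, ⟨hz, hFac _ _ hw hzw.isInfix⟩, List.prefix_or_prefix_of_prefix hzw huw⟩
  · exact absurd hwz (hnot z hz)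

end Words

section Reversal

variable {A : Type*} {F X Z : Set (List A)}

theorem isRational_iff_isRegular : IsRational Z ↔ Language.IsRegular Z :=
  exists_congr fun _ ↦ exists_congr fun _ ↦ exists_congr fun _ ↦ Language.ext_iff.symm

theorem IsRational.finite_range_leftQuotient (hZ : IsRational Z) :
    (Set.range (Language.leftQuotient Z)).Finite :=
  (isRational_iff_isRegular.1 hZ).finite_range_leftQuotient

theorem IsRational.preimage_reverse (hZ : IsRational Z) : IsRational (List.reverse ⁻¹' Z) :=
  isRational_iff_isRegular.2 (isRational_iff_isRegular.1 hZ).reverse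

theorem Factorial.preimage_reverse (hF : Factorial F) : Factorial (List.reverse ⁻¹' F) :=
  fun _ _ hw huw ↦ hF _ _ hw (List.reverse_infix.2 huw)

theorem IrreducibleLanguage.preimage_reverse (hF : IrreducibleLanguage F) :
    IrreducibleLanguage (List.reverse ⁻¹' F) := by
  intro u hu v hv
  obtain ⟨w, hw⟩ := hF _ hv _ hu
  exact ⟨w.reverse, by simpa using hw⟩

theorem PrefixCode.preimage_reverse (hZ : PrefixCode Z) : SuffixCode (List.reverse ⁻¹' Z) :=
  ⟨hZ.1.preimage List.reverse_involutive.surjective,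
    fun _ hx ↦ List.reverse_ne_nil_iff.1 (hZ.2.1 _ hx),
    fun _ hx _ hy hxy ↦ List.reverse_injective (hZ.2.2 _ hx _ hy (List.reverse_prefix.2 hxy))⟩

theorem kStarSet_eq_kstar (X : Set (List A)) : KStarSet X = KStar.kstar (α := Language A) X :=
  Set.ext fun _ ↦ exists_congr fun _ ↦ and_comm

theorem kStarSet_preimage_reverse (X : Set (List A)) :
    KStarSet (List.reverse ⁻¹' X) = List.reverse ⁻¹' KStarSet X := by
  rw [kStarSet_eq_kstar, kStarSet_eq_kstar]
  exact (Language.reverse_kstar X).symm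

theorem rightFComplete_preimage_reverse :
    RightFComplete (List.reverse ⁻¹' X) (List.reverse ⁻¹' F) ↔ LeftFComplete X F := by
  simp only [RightFComplete, LeftFComplete, kStarSet_preimage_reverse, Set.mem_preimage]
  rw [List.reverse_involutive.surjective.forall]
  simp only [List.reverse_reverse]
  refine forall₂_congr fun u _ ↦ List.reverse_involutive.surjective.exists.trans ?_
  simp only [List.reverse_reverse, List.reverse_prefix]

theorem LeftFComplete.inter (hZF : LeftFComplete Z F) (hFac : Factorial F)
    (hFirr : IrreducibleLanguage F) (hZ : PrefixCode Z) (hZrat : IsRational Z) :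
    LeftFComplete (Z ∩ F) F :=
  rightFComplete_preimage_reverse.1 <|
    (rightFComplete_preimage_reverse.2 hZF).inter hFac.preimage_reverse hFirr.preimage_reverse
      hZ.preimage_reverse hZrat.preimage_reverse.finite_range_leftQuotient

end Reversal

theorem inter_rational_complete_bifix_is_F_complete_bifix_general
    {A : Type*} {F Z : Set (List A)} (hF : Recurrent F) (hZrat : IsRational Z)
    (hZbifix : BifixCode Z) (hZF : FComplete Z F) :
    BifixCode (Z ∩ F) ∧ (Z ∩ F) ⊆ F ∧ FComplete (Z ∩ F) F := by
  obtain ⟨hsub, hirr⟩ := hF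
  have hfac : Factorial F := hsub.2.1
  have hright : RightFComplete (Z ∩ F) F :=
    hZF.1.inter hfac hirr hZbifix.2 hZrat.finite_range_leftQuotient
  have hleft : LeftFComplete (Z ∩ F) F := hZF.2.inter hfac hirr hZbifix.1 hZrat
  obtain ⟨u, hu, hne⟩ := hsub.exists_ne_nil
  obtain ⟨z, hz, -⟩ := hright.exists_prefix_or_prefix hu hne
  exact ⟨hZbifix.mono Set.inter_subset_left ⟨z, hz⟩, Set.inter_subset_right, hright, hleft⟩

/-- If `F` is recurrent and `Z` is a rational complete bifix code,
then `Z ∩ F` is an `F`-complete bifix code. -/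
theorem inter_rational_complete_bifix_is_F_complete_bifix
    {A : Type*} [Fintype A] [Nonempty A] (F Z : Set (List A))
    (hF : Recurrent F) (hZrat : IsRational Z) (hZbifix : BifixCode Z)
    (hZcomp : FComplete Z Set.univ) :
    BifixCode (Z ∩ F) ∧ (Z ∩ F) ⊆ F ∧ FComplete (Z ∩ F) F :=
  inter_rational_complete_bifix_is_F_complete_bifix_general hF hZrat hZbifix
    (hZcomp.mono_right (Set.subset_univ F))
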